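/- For every integer n ≥ 3, the cycle graph C_n satisfies: rvcl(C_n) = 3 if 3 ≤ n ≤ 7; rvcl(C_n) = ⌈n/2⌉ − 1 if n ∈ {9, 15} or 11 ≤ n ≤ 13; and rvcl(C_n) = ⌈n/2⌉ if n ∈ {8, 10, 14} or n ≥ 16. -/

import Mathlib

namespace LocatingRainbow

open SimpleGraph

variable {V : Type*}

/-- The internal vertices of a walk: its support without the endpoints. -/
def internalVertices {G : SimpleGraph V} {u v : V} (p : G.Walk u v) : List V :=
  p.support.tail.dropLast

/-- `c` is a rainbow vertex coloring of `G` (with colors in `Fin k`) if any two distinct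
vertices are joined by a path whose internal vertices have pairwise distinct colors. -/
def IsRainbowVertexColoring (G : SimpleGraph V) {k : ℕ} (c : V → Fin k) : Prop :=
  ∀ u v : V, u ≠ v → ∃ p : G.Walk u v, p.IsPath ∧ ((internalVertices p).map c).Nodup

/-- The distance from a vertex `v` to the color class of the color `i`. -/
noncomputable def distToColor (G : SimpleGraph V) {k : ℕ} (c : V → Fin k) (v : V) (i : Fin k) :
    ℕ :=
  sInf {m | ∃ y, c y = i ∧ G.dist v y = m}

/-- The rainbow code of a vertex `v`: the vector of distances to all color classes. -/
noncomputable def rainbowCode (G : SimpleGraph V) {k : ℕ} (c : V → Fin k) (v : V) :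
    Fin k → ℕ :=
  fun i => distToColor G c v i

/-- `c` is a locating rainbow coloring if it is a rainbow vertex coloring and distinct
vertices have distinct rainbow codes. -/
def IsLocatingRainbowColoring (G : SimpleGraph V) {k : ℕ} (c : V → Fin k) : Prop :=
  IsRainbowVertexColoring G c ∧ Function.Injective (rainbowCode G c)

/-- The rainbow vertex connection number of `G`. -/
noncomputable def rvc (G : SimpleGraph V) : ℕ :=
  sInf {k | ∃ c : V → Fin k, IsRainbowVertexColoring G c}

/-- The locating rainbow connection number of `G`. -/
noncomputable def rvcl (G : SimpleGraph V) : ℕ :=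
  sInf {k | ∃ c : V → Fin k, IsLocatingRainbowColoring G c}

end LocatingRainbow

/-!
Between two vertices of `C_n` there are only two paths, the two arcs, so a coloring is a rainbow
vertex coloring if and only if, for all `a ≠ b`, one of the open arcs between `a` and `b` is
rainbow. For vertices `x` and `y` of the same color, the pair `x - 1`, `y + 1` shows that the
clockwise distance from `x` to `y` is at least `n - k - 3`. Three vertices of one color would then
make `n` at least `3 * (n - k - 3)`, so for large `n` every color occurs at most twice and
`n ≤ 2 * k`; conversely, running twice through `⌈n / 2⌉` colors gives a rainbow vertex coloring,
and swapping two colors in the second run makes it locating.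

For small `n` the codes matter: a vertex whose closed neighborhood meets every color class has a
code determined by its color. This rules out two colors for every `n`, and three colors for
`n = 8` and `n = 9`; for `n = 10` and four colors, three vertices of one color have gaps `3, 3, 4`,
which forces two of them to have equal codes.

Vertices are represented by natural numbers `a`, cast to `Fin n`, so that an arc becomes an
interval `Set.Ioo a b` with `a < b < a + n` and the complementary arc is `Set.Ioo b (a + n)`.
-/

namespace LocatingRainbow

open SimpleGraph

section General

variable {G : SimpleGraph V} {k : ℕ} {c : V → Fin k} {i : Fin k} {u v w y : V}

theorem distToColor_eq_dist (hy : c y = i) (h : ∀ z, c z = i → G.dist v y ≤ G.dist v z) :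
    distToColor G c v i = G.dist v y :=
  le_antisymm (Nat.sInf_le ⟨y, hy, rfl⟩) <|
    le_csInf ⟨_, y, hy, rfl⟩ <| by rintro _ ⟨z, hz, rfl⟩; exact h z hz

theorem distToColor_self (v : V) : distToColor G c v (c v) = 0 := by
  rw [distToColor_eq_dist rfl fun z _ ↦ by simp, dist_self]

theorem distToColor_eq_one (hG : G.Preconnected) (hv : c v ≠ i) (hvw : G.Adj v w)
    (hw : c w = i) : distToColor G c v i = 1 := by
  rw [← dist_eq_one_iff_adj.mpr hvw]
  refine distToColor_eq_dist hw fun z hz ↦ ?_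
  rw [dist_eq_one_iff_adj.mpr hvw]
  exact (hG v z).pos_dist_of_ne (by rintro rfl; exact hv hz)

theorem distToColor_eq_two (hG : G.Preconnected) (hv : c v ≠ i)
    (hnbr : ∀ z, G.Adj v z → c z ≠ i) (hvw : G.Adj v w) (hwy : G.Adj w y) (hy : c y = i) :
    distToColor G c v i = 2 := by
  have two_le : ∀ z, c z = i → 2 ≤ G.dist v z := fun z hz ↦ by
    have hpos : 0 < G.dist v z := (hG v z).pos_dist_of_ne (by rintro rfl; exact hv hz)
    have hne : G.dist v z ≠ 1 := fun h ↦ hnbr z (dist_eq_one_iff_adj.mp h) hz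
    omega
  have hdist : G.dist v y = 2 :=
    le_antisymm (dist_le (.cons hvw (.cons hwy .nil))) (two_le y hy)
  rw [distToColor_eq_dist hy fun z hz ↦ hdist ▸ two_le z hz, hdist]

theorem distToColor_lt_distToColor (hy : c y = i)
    (h : ∀ z, c z = i → G.dist u y < G.dist v z) :
    distToColor G c u i < distToColor G c v i := by
  obtain ⟨z, hz, hvz⟩ : distToColor G c v i ∈ {m | ∃ y, c y = i ∧ G.dist v y = m} :=
    Nat.sInf_mem ⟨_, y, hy, rfl⟩
  calc distToColor G c u i ≤ G.dist u y := Nat.sInf_le ⟨y, hy, rfl⟩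
    _ < G.dist v z := h z hz
    _ = distToColor G c v i := hvz

theorem color_eq_of_rainbowCode_eq (hG : G.Preconnected)
    (h : rainbowCode G c u = rainbowCode G c v) : c u = c v := by
  by_contra hne
  have hlt : distToColor G c u (c u) < distToColor G c v (c u) :=
    distToColor_lt_distToColor rfl fun z hz ↦ by
      rw [dist_self]
      exact (hG v z).pos_dist_of_ne (by rintro rfl; exact hne hz.symm)
  exact hlt.ne (congrFun h (c u))

/-- A vertex is dominant if its closed neighborhood meets every color class. In a connected graph
its code is then determined by its own color, so a locating coloring has at most one dominant
vertex of each color. -/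
def IsDominant (G : SimpleGraph V) {k : ℕ} (c : V → Fin k) (v : V) : Prop :=
  ∀ i, i ≠ c v → ∃ w, G.Adj v w ∧ c w = i

theorem IsDominant.rainbowCode_eq (hG : G.Preconnected) (hv : IsDominant G c v) :
    rainbowCode G c v = fun i ↦ if i = c v then 0 else 1 := by
  funext i
  split_ifs with hi
  · exact hi ▸ distToColor_self v
  · obtain ⟨w, hvw, hw⟩ := hv i hi
    exact distToColor_eq_one hG (Ne.symm hi) hvw hw

theorem rainbowCode_eq_of_adj_adj (hG : G.Preconnected) (hi : i ≠ c v)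
    (hnbr : ∀ z, G.Adj v z → c z ≠ i) (hvw : G.Adj v w) (hwy : G.Adj w y) (hy : c y = i)
    (hdom : ∀ j, j ≠ c v → j ≠ i → ∃ z, G.Adj v z ∧ c z = j) :
    rainbowCode G c v = fun j ↦ if j = c v then 0 else if j = i then 2 else 1 := by
  funext j
  split_ifs with hjv hji
  · exact hjv ▸ distToColor_self v
  · exact hji ▸ distToColor_eq_two hG hi.symm hnbr hvw hwy hy
  · obtain ⟨z, hvz, hz⟩ := hdom j hjv hji
    exact distToColor_eq_one hG (Ne.symm hjv) hvz hz

theorem rainbowCode_eq_of_adj_iff {c : V → Fin 4} (hG : G.Preconnected)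
    (hv : ∀ z, G.Adj v z ↔ z = u ∨ z = w) (hwy : G.Adj w y) (hc : [c u, c v, c w, c y].Nodup) :
    rainbowCode G c v = fun i ↦ if i = c v then 0 else if i = c y then 2 else 1 := by
  simp only [List.nodup_cons, List.mem_cons, List.not_mem_nil, or_false, not_or] at hc
  have huw : ∀ i, i ≠ c v → i ≠ c y → c u = i ∨ c w = i := by omega
  refine rainbowCode_eq_of_adj_adj hG (by tauto) ?_ ((hv w).mpr (.inr rfl)) hwy rfl
    fun i hiv hiy ↦ ?_
  · rintro z hz
    rcases (hv z).mp hz with rfl | rfl <;> tauto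
  · rcases huw i hiv hiy with h | h
    · exact ⟨u, (hv u).mpr (.inl rfl), h⟩
    · exact ⟨w, (hv w).mpr (.inr rfl), h⟩

theorem IsLocatingRainbowColoring.injOn_isDominant (hG : G.Preconnected)
    (hc : IsLocatingRainbowColoring G c) : Set.InjOn c {v | IsDominant G c v} :=
  fun u hu v hv huv ↦ hc.2 <| by rw [hu.rainbowCode_eq hG, hv.rainbowCode_eq hG, huv]

theorem isDominant_of_adj_of_ne {c : V → Fin 2} (hvw : G.Adj v w) (hne : c v ≠ c w) :
    IsDominant G c v :=
  fun i hi ↦ ⟨w, hvw, by omega⟩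

theorem IsLocatingRainbowColoring.exists_color_ne [Nontrivial V]
    (hc : IsLocatingRainbowColoring G c) : ∃ u v, c u ≠ c v := by
  by_contra! hconst
  obtain ⟨u, v, huv⟩ := exists_pair_ne V
  refine huv (hc.2 (funext fun i ↦ ?_))
  by_cases hi : i = c u
  · simp only [rainbowCode, hi, distToColor_self]
    rw [hconst u v, distToColor_self]
  · have hempty : ∀ y, c y ≠ i := fun y hy ↦ hi (hy.symm.trans (hconst y u))
    simp only [rainbowCode, distToColor, hempty, false_and, exists_false]

-- With two colors, both endpoints of a bichromatic edge are dominant, so there is only one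
-- bichromatic edge, and every walk between the two color classes crosses it.
theorem IsLocatingRainbowColoring.exists_isBridge [Nontrivial V] (hG : G.Preconnected)
    {c : V → Fin 2} (hc : IsLocatingRainbowColoring G c) :
    ∃ x y, G.Adj x y ∧ G.IsBridge s(x, y) := by
  obtain ⟨u, v, huv⟩ := hc.exists_color_ne
  obtain ⟨p⟩ := hG u v
  obtain ⟨⟨⟨x, y⟩, hxy : G.Adj x y⟩, -, hx : c x = c u, hy : c y ≠ c u⟩ :=
    p.exists_boundary_dart {w | c w = c u} rfl huv.symm
  refine ⟨x, y, hxy, isBridge_iff.mpr ?_⟩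
  rintro ⟨q⟩
  obtain ⟨⟨⟨x', y'⟩, hxy'⟩, -, hx' : c x' = c u, hy' : c y' ≠ c u⟩ :=
    q.exists_boundary_dart {w | c w = c u} hx hy
  obtain ⟨hadj : G.Adj x' y', hmem : s(x', y') ∉ _⟩ := deleteEdges_adj.mp hxy'
  have hxx' : x' = x := hc.injOn_isDominant hG
    (isDominant_of_adj_of_ne hadj (by omega)) (isDominant_of_adj_of_ne hxy (by omega)) (by omega)
  have hyy' : y' = y := hc.injOn_isDominant hG
    (isDominant_of_adj_of_ne hadj.symm (by omega)) (isDominant_of_adj_of_ne hxy.symm (by omega))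
    (by omega)
  exact hmem (by rw [hxx', hyy']; rfl)

theorem IsLocatingRainbowColoring.comp_injective {k' : ℕ} {g : Fin k → Fin k'}
    (hc : IsLocatingRainbowColoring G c) (hg : Function.Injective g) :
    IsLocatingRainbowColoring G (g ∘ c) := by
  refine ⟨fun u v huv ↦ ?_, fun u v huv ↦ hc.2 (funext fun i ↦ ?_)⟩
  · obtain ⟨p, hp, hnodup⟩ := hc.1 u v huv
    exact ⟨p, hp, by simpa only [List.map_map] using hnodup.map hg⟩
  · simpa [rainbowCode, distToColor, hg.eq_iff] using congrFun huv (g i)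

theorem rvcl_eq_of_forall_not (hc : IsLocatingRainbowColoring G c)
    (hlower : ∀ d : V → Fin (k - 1), ¬ IsLocatingRainbowColoring G d) : rvcl G = k := by
  refine le_antisymm (Nat.sInf_le ⟨c, hc⟩) (le_csInf ⟨_, c, hc⟩ ?_)
  rintro m ⟨d, hd⟩
  by_contra! hlt
  exact hlower _ (hd.comp_injective (Fin.castLE_injective (Nat.le_sub_one_of_lt hlt)))

end General

section Walk

variable {G : SimpleGraph V} {u v x : V}

theorem internalVertices_reverse (p : G.Walk u v) :
    internalVertices p.reverse = (internalVertices p).reverse := by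
  simp only [internalVertices, Walk.support_reverse, List.tail_reverse, List.dropLast_reverse,
    List.tail_dropLast]

theorem mem_internalVertices {p : G.Walk u v} (hx : x ∈ p.support) (hu : x ≠ u) (hv : x ≠ v) :
    x ∈ internalVertices p := by
  have htail : x ∈ p.support.tail := by
    rw [← Walk.cons_tail_support, List.mem_cons] at hx
    exact hx.resolve_left hu
  have hne : p.support.tail ≠ [] := List.ne_nil_of_mem htail
  rw [← List.dropLast_append_getLast hne, List.mem_append, List.getLast_tail,
    Walk.getLast_support, List.mem_singleton] at htail
  exact htail.resolve_right hv

end Walk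

theorem nodup_map_range'_of_injOn {α : Type*} {f : ℕ → α} {a t : ℕ}
    (h : Set.InjOn f (Set.Ico a (a + t))) : ((List.range' a t).map f).Nodup :=
  List.Nodup.map_on
    (fun _ hx _ hy hxy ↦ h (List.mem_range'_1.mp hx) (List.mem_range'_1.mp hy) hxy)
    List.nodup_range'

section Arc

open scoped Fin.CommRing

variable {n k : ℕ} [NeZero n] {c : Fin n → Fin k} {a b x y : ℕ}

theorem injOn_natCast_Ico (a : ℕ) :
    Set.InjOn (Nat.cast : ℕ → Fin n) (Set.Ico a (a + n)) := by
  intro x hx y hy hxy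
  rw [CharP.natCast_eq_natCast (Fin n) n] at hxy
  exact hxy.eq_of_abs_lt (by rw [abs_lt]; simp only [Set.mem_Ico] at hx hy; omega)

theorem cycleGraph_adj_natCast_succ (hn : 2 ≤ n) (a : ℕ) :
    (cycleGraph n).Adj (a : Fin n) ((a + 1 : ℕ) : Fin n) := by
  obtain ⟨m, rfl⟩ := Nat.exists_eq_add_of_le' hn
  rw [cycleGraph_adj]
  right
  push_cast
  ring

theorem cycleGraph_adj_natCast_succ_iff (hn : 2 ≤ n) {w : Fin n} :
    (cycleGraph n).Adj ((a + 1 : ℕ) : Fin n) w ↔ w = (a : Fin n) ∨ w = ((a + 2 : ℕ) : Fin n) := by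
  refine ⟨fun h ↦ ?_, ?_⟩
  · obtain ⟨m, rfl⟩ := Nat.exists_eq_add_of_le' hn
    rw [cycleGraph_adj] at h
    push_cast at h ⊢
    refine h.imp (fun h ↦ ?_) (fun h ↦ ?_)
    · linear_combination -h
    · linear_combination h
  · rintro (rfl | rfl)
    · exact (cycleGraph_adj_natCast_succ hn a).symm
    · exact cycleGraph_adj_natCast_succ hn (a + 1)

theorem exists_walk_support_eq_map_range' (hn : 2 ≤ n) (a t : ℕ) :
    ∃ p : (cycleGraph n).Walk (a : Fin n) ((a + t : ℕ) : Fin n),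
      p.support = (List.range' a (t + 1)).map Nat.cast := by
  induction t generalizing a with
  | zero => exact ⟨.nil, rfl⟩
  | succ t ih =>
    obtain ⟨p, hp⟩ := ih (a + 1)
    refine ⟨.cons (cycleGraph_adj_natCast_succ hn a) (p.copy rfl ?_), ?_⟩
    · congr 1; omega
    · rw [Walk.support_cons, Walk.support_copy, hp, List.range'_succ (n := t + 1), List.map_cons]

theorem exists_isPath_of_injOn_Ioo (hab : a < b) (hba : b < a + n)
    (hinj : Set.InjOn (fun m : ℕ ↦ c m) (Set.Ioo a b)) :
    ∃ p : (cycleGraph n).Walk (a : Fin n) (b : Fin n),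
      p.IsPath ∧ ((internalVertices p).map c).Nodup := by
  obtain ⟨t, rfl⟩ := Nat.exists_eq_add_of_lt hab
  obtain ⟨p, hp⟩ := exists_walk_support_eq_map_range' (n := n) (by omega) a (t + 1)
  have hint : internalVertices p = (List.range' (a + 1) t).map Nat.cast := by
    rw [internalVertices, hp, List.range'_succ, List.map_cons, List.tail_cons,
      ← List.map_dropLast, List.range'_concat, List.dropLast_concat]
  refine ⟨p, .mk' ?_, ?_⟩
  · exact hp ▸ nodup_map_range'_of_injOn
      ((injOn_natCast_Ico a).mono (Set.Ico_subset_Ico_right (by omega)))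
  · rw [hint, List.map_map]
    refine nodup_map_range'_of_injOn (hinj.mono fun m hm ↦ ?_)
    exact ⟨hm.1, hm.2.trans_eq (by omega)⟩

theorem isRainbowVertexColoring_of_injOn_or_injOn
    (h : ∀ b < n, ∀ a < b, Set.InjOn (fun m : ℕ ↦ c m) (Set.Ioo a b) ∨
      Set.InjOn (fun m : ℕ ↦ c m) (Set.Ioo b (a + n))) :
    IsRainbowVertexColoring (cycleGraph n) c := by
  have exists_reverse : ∀ {u v : Fin n},
      (∃ p : (cycleGraph n).Walk u v, p.IsPath ∧ ((internalVertices p).map c).Nodup) →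
      ∃ p : (cycleGraph n).Walk v u, p.IsPath ∧ ((internalVertices p).map c).Nodup := by
    rintro u v ⟨p, hp, hnodup⟩
    refine ⟨p.reverse, hp.reverse, ?_⟩
    rwa [internalVertices_reverse, List.map_reverse, List.nodup_reverse]
  intro u v huv
  wlog hlt : u < v generalizing u v
  · exact exists_reverse (this v u huv.symm (lt_of_le_of_ne (not_lt.mp hlt) huv.symm))
  rcases h v v.isLt u hlt with harc | harc
  · have hpath := exists_isPath_of_injOn_Ioo hlt (by omega) harc
    rwa [Fin.cast_val_eq_self, Fin.cast_val_eq_self] at hpath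
  · have hpath := exists_isPath_of_injOn_Ioo (by omega) (by omega) harc
    rw [Nat.cast_add, Fin.natCast_self, add_zero, Fin.cast_val_eq_self, Fin.cast_val_eq_self]
      at hpath
    exact exists_reverse hpath

theorem mem_support_or_mem_support (p : (cycleGraph n).Walk (a : Fin n) (b : Fin n))
    (hx : x ∈ Set.Ioo a b) (hy : y ∈ Set.Ioo b (a + n)) :
    (x : Fin n) ∈ p.support ∨ (y : Fin n) ∈ p.support := by
  -- The positions strictly between `y` and `x + n` represent `a` but not `b`, and the walk can
  -- leave them only through `y` or `x`.
  simp only [Set.mem_Ioo] at hx hy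
  have ha : (a : Fin n) ∈ Nat.cast '' Set.Ioo y (x + n) :=
    ⟨a + n, ⟨by omega, by omega⟩, by simp⟩
  have hb : (b : Fin n) ∉ Nat.cast '' Set.Ioo y (x + n) := by
    rintro ⟨m, hm, hmb⟩
    simp only [Set.mem_Ioo] at hm
    have : m = b + n := injOn_natCast_Ico (n := n) (b + 1) ⟨by omega, by omega⟩
      ⟨by omega, by omega⟩ (by simpa using hmb)
    omega
  obtain ⟨⟨⟨-, w⟩, hadj⟩, hd, ⟨m, hm, rfl⟩, hw⟩ := p.exists_boundary_dart _ ha hb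
  have hw_mem : w ∈ p.support := p.dart_snd_mem_support_of_mem_darts hd
  simp only [Set.mem_Ioo] at hm
  obtain ⟨m, rfl⟩ := Nat.exists_eq_add_of_lt (Nat.zero_lt_of_lt hm.1)
  rw [zero_add] at hm hadj
  rcases (cycleGraph_adj_natCast_succ_iff (by omega)).mp hadj with rfl | rfl
  · have : m = y := by
      by_contra hne
      exact hw ⟨m, ⟨by omega, by omega⟩, rfl⟩
    exact .inr (this ▸ hw_mem)
  · have : m + 2 = x + n := by
      by_contra hne
      exact hw ⟨m + 2, ⟨by omega, by omega⟩, rfl⟩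
    exact .inl (by simpa [this] using hw_mem)

theorem injOn_Ioo_of_forall_mem_internalVertices {u v : Fin n} {p : (cycleGraph n).Walk u v}
    (hp : ((internalVertices p).map c).Nodup) (hba : b ≤ a + n)
    (h : ∀ x ∈ Set.Ioo a b, (x : Fin n) ∈ internalVertices p) :
    Set.InjOn (fun m : ℕ ↦ c m) (Set.Ioo a b) := fun x hx y hy hxy ↦
  injOn_natCast_Ico a ⟨hx.1.le, hx.2.trans_le hba⟩ ⟨hy.1.le, hy.2.trans_le hba⟩
    (List.inj_on_of_nodup_map hp (h x hx) (h y hy) hxy)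

theorem natCast_ne_of_mem_Ioo (hba : b < a + n) (hx : x ∈ Set.Ioo a b) :
    (x : Fin n) ≠ a ∧ (x : Fin n) ≠ b := by
  simp only [Set.mem_Ioo] at hx
  have h := injOn_natCast_Ico (n := n) a
  constructor <;> intro hne
  · exact hx.1.ne' (h ⟨by omega, by omega⟩ ⟨by omega, by omega⟩ hne)
  · exact hx.2.ne (h ⟨by omega, by omega⟩ ⟨by omega, by omega⟩ hne)

theorem IsRainbowVertexColoring.injOn_or_injOn (hc : IsRainbowVertexColoring (cycleGraph n) c)
    (hab : a < b) (hba : b < a + n) :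
    Set.InjOn (fun m : ℕ ↦ c m) (Set.Ioo a b) ∨
      Set.InjOn (fun m : ℕ ↦ c m) (Set.Ioo b (a + n)) := by
  have hne : (a : Fin n) ≠ b := fun h ↦ hab.ne <|
    injOn_natCast_Ico a ⟨le_rfl, by omega⟩ ⟨hab.le, hba⟩ h
  obtain ⟨p, -, hp⟩ := hc a b hne
  by_cases hall : ∀ x ∈ Set.Ioo a b, (x : Fin n) ∈ p.support
  · refine .inl (injOn_Ioo_of_forall_mem_internalVertices hp hba.le fun x hx ↦ ?_)
    have := natCast_ne_of_mem_Ioo hba hx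
    exact mem_internalVertices (hall x hx) this.1 this.2
  · push Not at hall
    obtain ⟨x, hx, hxp⟩ := hall
    refine .inr (injOn_Ioo_of_forall_mem_internalVertices hp (by omega) fun y hy ↦ ?_)
    have := natCast_ne_of_mem_Ioo (n := n) (by omega) hy
    exact mem_internalVertices ((mem_support_or_mem_support p hx hy).resolve_left hxp)
      (by simpa using this.2) this.1

end Arc

section LowerBounds

open scoped Fin.CommRing

variable {n k : ℕ}

theorem IsRainbowVertexColoring.add_le_of_color_eq [NeZero n] {c : Fin n → Fin k} {x y : ℕ}
    (hc : IsRainbowVertexColoring (cycleGraph n) c) (hxy : x < y)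
    (h : c (x : Fin n) = c (y : Fin n)) : x + n ≤ y + k + 3 := by
  have hn : 0 < n := NeZero.pos n
  by_contra! hlt
  -- Of the two arcs between `x - 1` and `y + 1`, shifted by `n` to avoid truncation at `x = 0`, one
  -- contains both `x` and `y`; so the other one, with `n - (y - x) - 3` vertices, is rainbow.
  rcases hc.injOn_or_injOn (a := x + n - 1) (b := y + n + 1) (by omega) (by omega) with
    hinj | hinj
  · exact hxy.ne <| Nat.add_right_cancel <|
      @hinj (x + n) ⟨by omega, by omega⟩ (y + n) ⟨by omega, by omega⟩ (by simpa using h)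
  · have hcard := Finset.card_le_card_of_injOn (s := Finset.Ioo (y + n + 1) (x + n - 1 + n))
      (t := Finset.univ) _ (fun _ _ ↦ Finset.mem_univ _) (by rwa [Finset.coe_Ioo])
    rw [Nat.card_Ioo, Finset.card_univ, Fintype.card_fin] at hcard
    omega

theorem IsRainbowVertexColoring.injOn_Ioo [NeZero n] {c : Fin n → Fin k} {a b : ℕ}
    (hc : IsRainbowVertexColoring (cycleGraph n) c) (h : b + k + 1 < a + n) :
    Set.InjOn (fun m : ℕ ↦ c m) (Set.Ioo a b) := by
  rintro x ⟨hx, hx'⟩ y ⟨hy, hy'⟩ hxy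
  by_contra hne
  rcases lt_or_gt_of_ne hne with hlt | hlt
  · have := hc.add_le_of_color_eq hlt hxy
    omega
  · have := hc.add_le_of_color_eq hlt hxy.symm
    omega

theorem exists_lt_lt_color_eq [NeZero n] (c : Fin n → Fin k) (h : 2 * k < n) :
    ∃ x y z : ℕ, x < y ∧ y < z ∧ z < n ∧
      c (x : Fin n) = c (y : Fin n) ∧ c (y : Fin n) = c (z : Fin n) := by
  obtain ⟨i, -, hi⟩ := Finset.exists_lt_card_fiber_of_mul_lt_card_of_maps_to
    (s := Finset.range n) (t := Finset.univ) (f := fun m : ℕ ↦ c (m : Fin n)) (n := 2)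
    (fun _ _ ↦ Finset.mem_univ _) (by simpa [mul_comm] using h)
  let f := Finset.orderEmbOfCardLe _ (Nat.succ_le_of_lt hi)
  have hf : ∀ j, f j < n ∧ c (f j : Fin n) = i := fun j ↦ by
    simpa using Finset.orderEmbOfCardLe_mem _ (Nat.succ_le_of_lt hi) j
  exact ⟨f 0, f 1, f 2, f.strictMono (by decide), f.strictMono (by decide), (hf 2).1,
    (hf 0).2.trans (hf 1).2.symm, (hf 1).2.trans (hf 2).2.symm⟩

theorem IsRainbowVertexColoring.le_two_mul {c : Fin n → Fin k}
    (hc : IsRainbowVertexColoring (cycleGraph n) c) (h : 3 * k + 9 < 2 * n) : n ≤ 2 * k := by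
  by_contra! hk
  have : NeZero n := ⟨by omega⟩
  obtain ⟨x, y, z, hxy, hyz, hzn, hcxy, hcyz⟩ := exists_lt_lt_color_eq c hk
  have h₁ := hc.add_le_of_color_eq hxy hcxy
  have h₂ := hc.add_le_of_color_eq hyz hcyz
  have h₃ := hc.add_le_of_color_eq (x := z) (y := x + n) (by omega)
    (by simpa using (hcxy.trans hcyz).symm)
  omega

theorem not_isBridge_cycleGraph (hn : 3 ≤ n) {x y : Fin n} (hxy : (cycleGraph n).Adj x y) :
    ¬ (cycleGraph n).IsBridge s(x, y) := by
  obtain ⟨m, rfl⟩ := Nat.exists_eq_add_of_le' hn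
  have hcycles : (cycleGraph (m + 3)).IsCycles := fun v _ ↦ by
    rw [Set.ncard_eq_toFinset_card', ← neighborFinset_def, card_neighborFinset_eq_degree,
      cycleGraph_degree_three_le]
  rw [isBridge_iff, not_not]
  exact hcycles.reachable_deleteEdges hxy

theorem not_isLocatingRainbowColoring_cycleGraph_two (hn : 3 ≤ n) (c : Fin n → Fin 2) :
    ¬ IsLocatingRainbowColoring (cycleGraph n) c := by
  intro hc
  have : Nontrivial (Fin n) := Fin.nontrivial_iff_two_le.mpr (by omega)
  obtain ⟨x, y, hxy, hbridge⟩ := hc.exists_isBridge cycleGraph_preconnected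
  exact not_isBridge_cycleGraph hn hxy hbridge

theorem isDominant_natCast_add_two [NeZero n] (hn : 2 ≤ n) {c : Fin n → Fin 3} {a : ℕ}
    (h : Set.InjOn (fun m : ℕ ↦ c m) (Set.Ioo a (a + 4))) :
    IsDominant (cycleGraph n) c ((a + 2 : ℕ) : Fin n) := by
  have h₁₂ := h.ne (x := a + 1) (y := a + 2) ⟨by omega, by omega⟩ ⟨by omega, by omega⟩ (by omega)
  have h₁₃ := h.ne (x := a + 1) (y := a + 3) ⟨by omega, by omega⟩ ⟨by omega, by omega⟩ (by omega)
  have h₂₃ := h.ne (x := a + 2) (y := a + 3) ⟨by omega, by omega⟩ ⟨by omega, by omega⟩ (by omega)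
  intro i hi
  by_cases ha : i = c ((a + 1 : ℕ) : Fin n)
  · exact ⟨_, (cycleGraph_adj_natCast_succ hn (a + 1)).symm, ha.symm⟩
  · exact ⟨(a + 3 : ℕ), cycleGraph_adj_natCast_succ hn (a + 2), by omega⟩

theorem not_isLocatingRainbowColoring_cycleGraph_eight (c : Fin 8 → Fin 3) :
    ¬ IsLocatingRainbowColoring (cycleGraph 8) c := by
  intro hc
  -- One of the two arcs between the antipodal vertices `u` and `u + 4` is rainbow, so its middle
  -- vertex is dominant: four dominant vertices share three colors.
  have hdom : ∀ u : Fin 4, ∃ m : ℕ, (m = u + 2 ∨ m = u + 6) ∧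
      IsDominant (cycleGraph 8) c (m : Fin 8) := fun u ↦
    (hc.1.injOn_or_injOn (a := u) (b := u + 4) (by omega) (by omega)).elim
      (fun h ↦ ⟨_, .inl rfl, isDominant_natCast_add_two (by omega) h⟩)
      (fun h ↦ ⟨_, .inr rfl, isDominant_natCast_add_two (by omega) h⟩)
  choose f hf hfdom using hdom
  obtain ⟨u, v, huv, hcolor⟩ :=
    Fintype.exists_ne_map_eq_of_card_lt (fun u ↦ c (f u : Fin 8)) (by simp)
  have hu := hf u
  have hv := hf v
  have hfuv : f u = f v := injOn_natCast_Ico (n := 8) 2 ⟨by omega, by omega⟩ ⟨by omega, by omega⟩ <|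
    hc.injOn_isDominant cycleGraph_preconnected (hfdom u) (hfdom v) hcolor
  omega

theorem not_isLocatingRainbowColoring_cycleGraph_nine (c : Fin 9 → Fin 3) :
    ¬ IsLocatingRainbowColoring (cycleGraph 9) c := by
  intro hc
  have hdom : ∀ v, IsDominant (cycleGraph 9) c v := by
    intro v
    have hinj := hc.1.injOn_Ioo (a := v + 7) (b := v + 11) (by omega)
    simpa [add_assoc] using isDominant_natCast_add_two (by omega) hinj
  obtain ⟨u, v, huv, hcolor⟩ := Fintype.exists_ne_map_eq_of_card_lt c (by simp)
  exact huv (hc.injOn_isDominant cycleGraph_preconnected (hdom u) (hdom v) hcolor)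

theorem rainbowCode_natCast_add_two [NeZero n] (hn : 2 ≤ n) {c : Fin n → Fin 4} {a : ℕ}
    (h : Set.InjOn (fun m : ℕ ↦ c m) (Set.Ioo a (a + 5))) :
    rainbowCode (cycleGraph n) c ((a + 2 : ℕ) : Fin n) = fun i ↦
      if i = c ((a + 2 : ℕ) : Fin n) then 0 else if i = c ((a + 4 : ℕ) : Fin n) then 2 else 1 :=
  rainbowCode_eq_of_adj_iff cycleGraph_preconnected
    (fun _ ↦ cycleGraph_adj_natCast_succ_iff hn) (cycleGraph_adj_natCast_succ hn (a + 3))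
    (nodup_map_range'_of_injOn (a := a + 1) (t := 4) h)

theorem rainbowCode_natCast_add_three [NeZero n] (hn : 2 ≤ n) {c : Fin n → Fin 4} {a : ℕ}
    (h : Set.InjOn (fun m : ℕ ↦ c m) (Set.Ioo a (a + 5))) :
    rainbowCode (cycleGraph n) c ((a + 3 : ℕ) : Fin n) = fun i ↦
      if i = c ((a + 3 : ℕ) : Fin n) then 0 else if i = c ((a + 1 : ℕ) : Fin n) then 2 else 1 :=
  rainbowCode_eq_of_adj_iff cycleGraph_preconnected
    (fun _ ↦ (cycleGraph_adj_natCast_succ_iff hn).trans or_comm)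
    (cycleGraph_adj_natCast_succ hn (a + 1)).symm
    (List.nodup_reverse.mpr (nodup_map_range'_of_injOn (a := a + 1) (t := 4) h))

theorem IsRainbowVertexColoring.exists_color_eq_add_three_add_six {c : Fin 10 → Fin 4}
    (hc : IsRainbowVertexColoring (cycleGraph 10) c) :
    ∃ a : ℕ, c (a : Fin 10) = c ((a + 3 : ℕ) : Fin 10) ∧
      c (a : Fin 10) = c ((a + 6 : ℕ) : Fin 10) := by
  obtain ⟨x, y, z, hxy, hyz, hz, hcxy, hcyz⟩ := exists_lt_lt_color_eq c (by omega)
  have hczx : c (z : Fin 10) = c ((x + 10 : ℕ) : Fin 10) := by simpa using (hcxy.trans hcyz).symm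
  have hcxy' : c ((x + 10 : ℕ) : Fin 10) = c ((y + 10 : ℕ) : Fin 10) := by simpa using hcxy
  have hxy' := hc.add_le_of_color_eq hxy hcxy
  have hyz' := hc.add_le_of_color_eq hyz hcyz
  have hzx' := hc.add_le_of_color_eq (by omega) hczx
  obtain ⟨hy, hz⟩ | ⟨hy, hz⟩ | ⟨hy, hz⟩ : (y = x + 3 ∧ z = x + 6) ∨ (y = x + 3 ∧ x + 10 = z + 3) ∨
      (z = y + 3 ∧ x + 10 = y + 6) := by omega
  · exact ⟨x, hy ▸ hcxy, hz ▸ hcxy.trans hcyz⟩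
  · exact ⟨z, hz ▸ hczx, (show y + 10 = z + 6 by omega) ▸ hczx.trans hcxy'⟩
  · exact ⟨y, hy ▸ hcyz, hz ▸ hcyz.trans hczx⟩

theorem not_isLocatingRainbowColoring_cycleGraph_ten (c : Fin 10 → Fin 4) :
    ¬ IsLocatingRainbowColoring (cycleGraph 10) c := by
  intro hc
  obtain ⟨a, h₃, h₆⟩ := hc.1.exists_color_eq_add_three_add_six
  -- The color shared by `a`, `a + 3` and `a + 6` forces rainbow arcs around `a + 6` and
  -- `a + 10 = a`, in which both of these vertices are at distance two from the color of `a + 8`.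
  have period (m : ℕ) : c ((m + 10 : ℕ) : Fin 10) = c (m : Fin 10) := by simp
  have h₅₉ : Set.InjOn (fun m : ℕ ↦ c m) (Set.Ioo (a + 4) (a + 9)) :=
    (hc.1.injOn_or_injOn (a := a + 4) (b := a + 9) (by omega) (by omega)).resolve_right
      fun h ↦ h.ne (x := a + 10) (y := a + 13) ⟨by omega, by omega⟩ ⟨by omega, by omega⟩
        (by omega) ((period a).trans (h₃.trans (period (a + 3)).symm))
  have h₇₂ : Set.InjOn (fun m : ℕ ↦ c m) (Set.Ioo (a + 7) (a + 12)) :=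
    (hc.1.injOn_or_injOn (a := a + 7) (b := a + 12) (by omega) (by omega)).resolve_right
      fun h ↦ h.ne (x := a + 13) (y := a + 16) ⟨by omega, by omega⟩ ⟨by omega, by omega⟩
        (by omega) ((period (a + 3)).trans ((h₃.symm.trans h₆).trans (period (a + 6)).symm))
  have code₆ := rainbowCode_natCast_add_two (by omega) h₅₉
  have code₁₀ := rainbowCode_natCast_add_three (by omega) h₇₂
  have hcolor : c ((a + 6 : ℕ) : Fin 10) = c ((a + 10 : ℕ) : Fin 10) :=
    h₆.symm.trans (period a).symm
  have hvertex : ((a + 6 : ℕ) : Fin 10) = ((a + 10 : ℕ) : Fin 10) :=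
    hc.2 (by rw [code₆, code₁₀, hcolor])
  have := injOn_natCast_Ico (n := 10) (a + 6) ⟨by omega, by omega⟩ ⟨by omega, by omega⟩ hvertex
  omega

theorem not_isLocatingRainbowColoring_cycleGraph_of_eq_or_le
    (hn : n = 8 ∨ n = 10 ∨ n = 14 ∨ 16 ≤ n) (c : Fin n → Fin ((n + 1) / 2 - 1)) :
    ¬ IsLocatingRainbowColoring (cycleGraph n) c := by
  rcases hn with rfl | rfl | hn
  · exact not_isLocatingRainbowColoring_cycleGraph_eight c
  · exact not_isLocatingRainbowColoring_cycleGraph_ten c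
  · intro hc
    have := hc.1.le_two_mul (by omega)
    omega

theorem not_isLocatingRainbowColoring_cycleGraph_of_nine_or_fifteen
    (hn : n = 9 ∨ n = 15 ∨ (11 ≤ n ∧ n ≤ 13)) (c : Fin n → Fin ((n + 1) / 2 - 1 - 1)) :
    ¬ IsLocatingRainbowColoring (cycleGraph n) c := by
  rcases hn with rfl | hn
  · exact not_isLocatingRainbowColoring_cycleGraph_nine c
  · intro hc
    have := hc.1.le_two_mul (by omega)
    omega

end LowerBounds

section CycleDist

open scoped Fin.CommRing

variable {n : ℕ}

/-- The distance between two vertices of a cycle, as a formula in their positions: the length of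
the shorter of the two arcs joining them. -/
def cycleDist (u v : Fin n) : ℕ :=
  min ((u - v : ℕ) + (v - u)) (n - ((u - v : ℕ) + (v - u)))

theorem cycleDist_comm (u v : Fin n) : cycleDist u v = cycleDist v u := by
  unfold cycleDist
  omega

theorem cycleDist_le_add_one_of_adj {u v : Fin n} (h : (cycleGraph n).Adj u v) (w : Fin n) :
    cycleDist u w ≤ cycleDist v w + 1 := by
  have hval : (u + 1 : ℕ) = v ∨ (v + 1 : ℕ) = u ∨ (u + 1 : ℕ) = n + v ∨ (v + 1 : ℕ) = n + u := by
    have huv := h.ne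
    rw [cycleGraph_adj'] at h
    rcases lt_or_gt_of_ne huv with hlt | hlt <;>
      rw [Fin.coe_sub_iff_lt.mpr hlt, Fin.sub_val_of_le hlt.le] at h <;> omega
  unfold cycleDist
  omega

theorem cycleDist_le_length {u v : Fin n} (p : (cycleGraph n).Walk u v) :
    cycleDist u v ≤ p.length := by
  induction p with
  | nil => simp [cycleDist]
  | cons hadj p ih =>
    rw [Walk.length_cons]
    exact (cycleDist_le_add_one_of_adj hadj _).trans (Nat.add_le_add_right ih 1)

theorem cycleGraph_dist_natCast_add_le [NeZero n] (hn : 2 ≤ n) (a t : ℕ) :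
    (cycleGraph n).dist (a : Fin n) ((a + t : ℕ) : Fin n) ≤ t := by
  obtain ⟨p, hp⟩ := exists_walk_support_eq_map_range' hn a t
  have hlength : p.length + 1 = t + 1 := by
    rw [← Walk.length_support, hp, List.length_map, List.length_range']
  exact (dist_le p).trans (by omega)

theorem cycleGraph_dist (hn : 2 ≤ n) (u v : Fin n) :
    (cycleGraph n).dist u v = cycleDist u v := by
  have : NeZero n := ⟨by omega⟩
  refine le_antisymm ?_ ?_
  · wlog huv : u ≤ v generalizing u v
    · rw [dist_comm, cycleDist_comm]
      exact this v u (le_of_not_ge huv)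
    have hdirect := cycleGraph_dist_natCast_add_le hn u (v - u : ℕ)
    have hwrap := cycleGraph_dist_natCast_add_le hn v (n - (v - u) : ℕ)
    rw [show (u + (v - u) : ℕ) = v by omega, Fin.cast_val_eq_self, Fin.cast_val_eq_self] at hdirect
    rw [show (v + (n - (v - u)) : ℕ) = u + n by omega, Nat.cast_add, Fin.natCast_self, add_zero,
      Fin.cast_val_eq_self, Fin.cast_val_eq_self, dist_comm] at hwrap
    unfold cycleDist
    omega
  · obtain ⟨p, hp⟩ := (cycleGraph_preconnected u v).exists_walk_length_eq_dist
    exact hp ▸ cycleDist_le_length p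

end CycleDist

section UpperBounds

open scoped Fin.CommRing

variable {n k : ℕ} {c : Fin n → Fin k}

theorem rainbowCode_injective_of_cycleDist_lt (hn : 2 ≤ n)
    (h : ∀ u v, u < v → c u = c v → ∃ y,
      (∀ z, c z = c y → cycleDist u y < cycleDist v z) ∨
        ∀ z, c z = c y → cycleDist v y < cycleDist u z) :
    Function.Injective (rainbowCode (cycleGraph n) c) := by
  simp only [← cycleGraph_dist hn] at h
  intro u v huv
  by_contra hne
  wlog hlt : u < v generalizing u v
  · exact this huv.symm (Ne.symm hne) (lt_of_le_of_ne (not_lt.mp hlt) (Ne.symm hne))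
  obtain ⟨y, hy | hy⟩ := h u v hlt (color_eq_of_rainbowCode_eq cycleGraph_preconnected huv)
  · exact (distToColor_lt_distToColor rfl hy).ne (congrFun huv (c y))
  · exact (distToColor_lt_distToColor rfl hy).ne' (congrFun huv (c y))

theorem isRainbowVertexColoring_of_le_cycleDist (hn : 2 ≤ n)
    (h : ∀ x y, x ≠ y → c x = c y → n / 2 ≤ cycleDist x y + 1) :
    IsRainbowVertexColoring (cycleGraph n) c := by
  have : NeZero n := ⟨by omega⟩
  have injOn_of_le : ∀ a b : ℕ, b ≤ a + n / 2 →
      Set.InjOn (fun m : ℕ ↦ c m) (Set.Ioo a b) := by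
    rintro a b hba x ⟨hx, hx'⟩ y ⟨hy, hy'⟩ hxy
    by_contra hne
    wlog hlt : x < y generalizing x y
    · exact this hy hy' hx hx' hxy.symm (Ne.symm hne) (by omega)
    have hxy_ne : (x : Fin n) ≠ y := fun h ↦
      hne (injOn_natCast_Ico x ⟨le_rfl, by omega⟩ ⟨hlt.le, by omega⟩ h)
    have hfar := h x y hxy_ne hxy
    have hdist := cycleGraph_dist_natCast_add_le hn x (y - x)
    rw [cycleGraph_dist hn, Nat.add_sub_cancel' hlt.le] at hdist
    omega
  refine isRainbowVertexColoring_of_injOn_or_injOn fun b _ a hab ↦ ?_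
  rcases le_total (2 * (b - a)) n with hshort | hshort
  · exact .inl (injOn_of_le a b (by omega))
  · exact .inr (injOn_of_le b (a + n) (by omega))

theorem isLocatingRainbowColoring_of_injOn_of_cycleDist_lt [NeZero n] (hn : 2 ≤ n)
    (hinj : ∀ b < n, ∀ a < b, Set.InjOn (fun m : ℕ ↦ c m) (Finset.Ioo a b) ∨
      Set.InjOn (fun m : ℕ ↦ c m) (Finset.Ioo b (a + n)))
    (hdist : ∀ u v, u < v → c u = c v → ∃ y,
      (∀ z, c z = c y → cycleDist u y < cycleDist v z) ∨
        ∀ z, c z = c y → cycleDist v y < cycleDist u z) :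
    IsLocatingRainbowColoring (cycleGraph n) c := by
  simp only [Finset.coe_Ioo] at hinj
  exact ⟨isRainbowVertexColoring_of_injOn_or_injOn hinj,
    rainbowCode_injective_of_cycleDist_lt hn hdist⟩

theorem exists_isLocatingRainbowColoring_of_le_seven (h₃ : 3 ≤ n) (h₇ : n ≤ 7) :
    ∃ c : Fin n → Fin 3, IsLocatingRainbowColoring (cycleGraph n) c := by
  have hwitness := @isLocatingRainbowColoring_of_injOn_of_cycleDist_lt n 3
  interval_cases n
  · exact ⟨![0, 1, 2], hwitness (by decide) (by decide) (by decide)⟩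
  · exact ⟨![0, 0, 1, 2], hwitness (by decide) (by decide) (by decide)⟩
  · exact ⟨![0, 0, 0, 1, 2], hwitness (by decide) (by decide) (by decide)⟩
  · exact ⟨![0, 0, 0, 0, 1, 2], hwitness (by decide) (by decide) (by decide)⟩
  · exact ⟨![0, 0, 0, 1, 0, 2, 1], hwitness (by decide) (by decide) (by decide +kernel)⟩

theorem exists_isLocatingRainbowColoring_of_nine_or_fifteen
    (hn : n = 9 ∨ n = 15 ∨ (11 ≤ n ∧ n ≤ 13)) :
    ∃ c : Fin n → Fin ((n + 1) / 2 - 1), IsLocatingRainbowColoring (cycleGraph n) c := by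
  have hwitness := @isLocatingRainbowColoring_of_injOn_of_cycleDist_lt n ((n + 1) / 2 - 1)
  obtain rfl | rfl | rfl | rfl | rfl : n = 9 ∨ n = 11 ∨ n = 12 ∨ n = 13 ∨ n = 15 := by omega
  · exact ⟨![0, 1, 0, 1, 2, 1, 0, 3, 2],
      hwitness (by decide) (by decide +kernel) (by decide +kernel)⟩
  · exact ⟨![0, 1, 2, 0, 1, 3, 0, 1, 2, 4, 3],
      hwitness (by decide) (by decide +kernel) (by decide +kernel)⟩
  · exact ⟨![0, 1, 2, 3, 0, 1, 4, 2, 0, 1, 3, 4],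
      hwitness (by decide) (by decide +kernel) (by decide +kernel)⟩
  · exact ⟨![0, 1, 2, 3, 0, 1, 4, 2, 0, 1, 3, 5, 4],
      hwitness (by decide) (by decide +kernel) (by decide +kernel)⟩
  · exact ⟨![0, 1, 2, 3, 4, 0, 5, 1, 6, 2, 0, 3, 4, 5, 6],
      hwitness (by decide) (by decide +kernel) (by decide +kernel)⟩

/-- The coloring `0, 1, 2, …, k - 1, 1, 0, 2, 3, …` of the vertices of `C_n` with `k = ⌈n / 2⌉`
colors: two copies of the word of all colors, where the swap of `0` and `1` in the second copy
breaks the symmetry between the two vertices of a color. -/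
def swappedDoubleColoring (hn : 3 ≤ n) (p : Fin n) : Fin ((n + 1) / 2) :=
  ⟨if (p : ℕ) < (n + 1) / 2 then p else if (p : ℕ) = (n + 1) / 2 then 1
    else if (p : ℕ) = (n + 1) / 2 + 1 then 0 else p - (n + 1) / 2, by split_ifs <;> omega⟩

theorem val_eq_or_of_swappedDoubleColoring_eq {hn : 3 ≤ n} {x y : Fin n}
    (h : swappedDoubleColoring hn x = swappedDoubleColoring hn y) :
    (x : ℕ) = y ∨ (((x : ℕ) ≤ 1 ∨ (y : ℕ) ≤ 1) ∧ (x + y : ℕ) = (n + 1) / 2 + 1) ∨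
      (2 ≤ (x : ℕ) ∧ (y : ℕ) = x + (n + 1) / 2) ∨ (2 ≤ (y : ℕ) ∧ (x : ℕ) = y + (n + 1) / 2) := by
  simp only [swappedDoubleColoring, Fin.mk.injEq] at h
  split_ifs at h <;> omega

theorem isRainbowVertexColoring_swappedDoubleColoring (hn : 3 ≤ n) :
    IsRainbowVertexColoring (cycleGraph n) (swappedDoubleColoring hn) := by
  refine isRainbowVertexColoring_of_le_cycleDist (by omega) fun x y hne hxy ↦ ?_
  have := val_eq_or_of_swappedDoubleColoring_eq hxy
  unfold cycleDist
  omega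

theorem isLocatingRainbowColoring_swappedDoubleColoring (hn : 8 ≤ n) :
    IsLocatingRainbowColoring (cycleGraph n) (swappedDoubleColoring (n := n) (by omega)) := by
  refine ⟨isRainbowVertexColoring_swappedDoubleColoring _,
    rainbowCode_injective_of_cycleDist_lt (by omega) fun u v huv hcolor ↦ ?_⟩
  obtain ⟨hu, hv⟩ | ⟨hu, hv⟩ | ⟨hu, hv⟩ : ((u : ℕ) = 0 ∧ (v : ℕ) = (n + 1) / 2 + 1) ∨
      ((u : ℕ) = 1 ∧ (v : ℕ) = (n + 1) / 2) ∨ (2 ≤ (u : ℕ) ∧ (v : ℕ) = u + (n + 1) / 2) := by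
    have := val_eq_or_of_swappedDoubleColoring_eq hcolor
    omega
  -- The distance to the color of vertex `2` separates both swapped pairs, and the distance to the
  -- color of vertex `0` separates all other pairs.
  · refine ⟨⟨(n + 1) / 2 + 2, by omega⟩, .inr fun z hz ↦ ?_⟩
    have := val_eq_or_of_swappedDoubleColoring_eq hz
    simp only [cycleDist] at this ⊢
    omega
  · refine ⟨⟨2, by omega⟩, .inl fun z hz ↦ ?_⟩
    have := val_eq_or_of_swappedDoubleColoring_eq hz
    simp only [cycleDist] at this ⊢
    omega
  · rcases lt_or_ge (2 * (u : ℕ)) ((n + 1) / 2 + 2) with hlt | hge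
    · refine ⟨⟨(n + 1) / 2 + 1, by omega⟩, .inr fun z hz ↦ ?_⟩
      have := val_eq_or_of_swappedDoubleColoring_eq hz
      simp only [cycleDist] at this ⊢
      omega
    · refine ⟨⟨0, by omega⟩, .inr fun z hz ↦ ?_⟩
      have := val_eq_or_of_swappedDoubleColoring_eq hz
      simp only [cycleDist] at this ⊢
      omega

end UpperBounds

end LocatingRainbow

open LocatingRainbow SimpleGraph in
/-- For every integer `n ≥ 3`, the cycle graph `C_n` satisfies: `rvcl(C_n) = 3` for
`3 ≤ n ≤ 7`; `rvcl(C_n) = ⌈n/2⌉ - 1` for `n ∈ {9, 15}` or `11 ≤ n ≤ 13`; and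
`rvcl(C_n) = ⌈n/2⌉` for `n ∈ {8, 10, 14}` or `n ≥ 16`. -/
theorem rvcl_cycleGraph (n : ℕ) (hn : 3 ≤ n) :
    (3 ≤ n ∧ n ≤ 7 → rvcl (cycleGraph n) = 3) ∧
    (n = 9 ∨ n = 15 ∨ (11 ≤ n ∧ n ≤ 13) → rvcl (cycleGraph n) = (n + 1) / 2 - 1) ∧
    (n = 8 ∨ n = 10 ∨ n = 14 ∨ 16 ≤ n → rvcl (cycleGraph n) = (n + 1) / 2) := by
  refine ⟨fun hn' ↦ ?_, fun hn' ↦ ?_, fun hn' ↦ ?_⟩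
  · obtain ⟨c, hc⟩ := exists_isLocatingRainbowColoring_of_le_seven hn hn'.2
    exact rvcl_eq_of_forall_not hc (not_isLocatingRainbowColoring_cycleGraph_two hn)
  · obtain ⟨c, hc⟩ := exists_isLocatingRainbowColoring_of_nine_or_fifteen hn'
    exact rvcl_eq_of_forall_not hc
      (not_isLocatingRainbowColoring_cycleGraph_of_nine_or_fifteen hn')
  · exact rvcl_eq_of_forall_not (isLocatingRainbowColoring_swappedDoubleColoring (by omega))
      (not_isLocatingRainbowColoring_cycleGraph_of_eq_or_le hn')
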